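/- In any complemented HMS model, for every individual i ∈ I and every event E, awareness of implicit knowledge of an event equals awareness of the event: A_i(L_i(E)) = A_i(E). -/

import Mathlib

/-!
The base-space of a nonempty event is the least expressive space that the event meets, so it
suffices to see that `E`, with base-space `S Φ`, and a nonempty `L(E)`, with base-space `S Ψ`,
meet each other's base-spaces. Let `ω ∈ L(E)`. Events are closed under projection to their
base-space, so `ω_Ψ ∈ L(E)`, and the nonempty set `Λ(ω_Ψ) ⊆ S Ψ` lies in `E`; hence `Φ ⊆ Ψ`.
Conversely, projecting `Λ(ω) ⊆ E` gives `Λ(ω_Φ) ⊆ (Λ(ω))_Φ ⊆ E`, that is, `ω_Φ ∈ L(E)`; hence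
`Ψ ⊆ Φ`.
-/

/-- The frame underlying HMS (Heifetz–Meier–Schipper) unawareness models: a complete
lattice of nonempty pairwise disjoint state spaces `S Φ` indexed by the subsets
`Φ ⊆ At` of atomic formulas (ordered by inclusion of the index), together with
commuting surjective projections `r Φ Ψ : S Φ → S Ψ` for `Ψ ⊆ Φ`. -/
structure HMSFrame (At : Type*) (Ω : Type*) where
  S : Set At → Set Ω
  S_nonempty : ∀ Φ : Set At, (S Φ).Nonempty
  S_disjoint : ∀ ⦃Φ Φ' : Set At⦄, Φ ≠ Φ' → Disjoint (S Φ) (S Φ')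
  S_cover : ∀ ω : Ω, ∃ Φ : Set At, ω ∈ S Φ
  r : Set At → Set At → Ω → Ω
  r_mem : ∀ ⦃Φ Ψ : Set At⦄, Ψ ⊆ Φ → ∀ ⦃ω : Ω⦄, ω ∈ S Φ → r Φ Ψ ω ∈ S Ψ
  r_surjOn : ∀ ⦃Φ Ψ : Set At⦄, Ψ ⊆ Φ → Set.SurjOn (r Φ Ψ) (S Φ) (S Ψ)
  r_id : ∀ (Φ : Set At), ∀ ω ∈ S Φ, r Φ Φ ω = ω
  r_comp : ∀ ⦃Φ Ψ Υ : Set At⦄, Υ ⊆ Ψ → Ψ ⊆ Φ → ∀ ω ∈ S Φ, r Ψ Υ (r Φ Ψ ω) = r Φ Υ ω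

variable {At Ω : Type*}

/-- `D^↑`, for a subset `D` of the space `S Φ`: all extensions of states in `D` to
(weakly) more expressive spaces. -/
def HMSFrame.up (F : HMSFrame At Ω) (Φ : Set At) (D : Set Ω) : Set Ω :=
  {ω : Ω | ∃ Ψ : Set At, Φ ⊆ Ψ ∧ ω ∈ F.S Ψ ∧ F.r Ψ Φ ω ∈ D}

/-- `E` is an event with base-space `S Φ` (and base some `D ⊆ S Φ`). -/
def HMSFrame.IsEvent (F : HMSFrame At Ω) (Φ : Set At) (E : Set Ω) : Prop :=
  ∃ D, D ⊆ F.S Φ ∧ E = F.up Φ D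

/-- Negation `¬E := (S Φ \ D)^↑` of an event `E` with base-space `S Φ`
(note `S Φ \ E = S Φ \ D` for an event `E` with base `D ⊆ S Φ`). -/
def HMSFrame.neg (F : HMSFrame At Ω) (Φ : Set At) (E : Set Ω) : Set Ω :=
  F.up Φ (F.S Φ \ E)

/-- Properties of the (explicit) possibility correspondence of HMS models:
nonemptiness, Confinement, Generalized Reflexivity, Stationarity,
Projections Preserve Ignorance, and Projections Preserve Knowledge. -/
structure IsPossibility (F : HMSFrame At Ω) (Pi : Ω → Set Ω) : Prop where
  nonempty : ∀ ω : Ω, (Pi ω).Nonempty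
  confinement : ∀ ⦃Φ : Set At⦄ ⦃ω : Ω⦄, ω ∈ F.S Φ → ∃ Ψ, Ψ ⊆ Φ ∧ Pi ω ⊆ F.S Ψ
  genRefl : ∀ ⦃Υ : Set At⦄ ⦃ω : Ω⦄, Pi ω ⊆ F.S Υ → ω ∈ F.up Υ (Pi ω)
  stationarity : ∀ ⦃ω ω' : Ω⦄, ω' ∈ Pi ω → Pi ω' = Pi ω
  projIgnorance : ∀ ⦃Φ Ψ : Set At⦄ ⦃ω : Ω⦄, ω ∈ F.S Φ → Ψ ⊆ Φ →
    ∀ ⦃Υ Υ' : Set At⦄, Pi ω ⊆ F.S Υ → Pi (F.r Φ Ψ ω) ⊆ F.S Υ' →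
      F.up Υ (Pi ω) ⊆ F.up Υ' (Pi (F.r Φ Ψ ω))
  projKnowledge : ∀ ⦃Φ Ψ Υ : Set At⦄ ⦃ω : Ω⦄, Υ ⊆ Ψ → Ψ ⊆ Φ → ω ∈ F.S Φ →
    Pi ω ⊆ F.S Ψ → F.r Ψ Υ '' Pi ω = Pi (F.r Φ Υ ω)

/-- Properties of an implicit possibility correspondence `La` relative to the
explicit possibility correspondence `Pi`: Reflexivity, Stationarity, Projections
Preserve Implicit Knowledge (whose statement `(Λ(ω))_Ψ = Λ(ω_Ψ)` presupposes that
the projection of `Λ(ω)` is defined, i.e. `Λ(ω) ⊆ S Φ` for `ω ∈ S Φ`),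
Explicit Measurability, and Implicit Measurability. -/
structure IsImplicit (F : HMSFrame At Ω) (Pi La : Ω → Set Ω) : Prop where
  refl : ∀ ω : Ω, ω ∈ La ω
  stationarity : ∀ ⦃ω ω' : Ω⦄, ω' ∈ La ω → La ω' = La ω
  projImplicit : ∀ ⦃Φ : Set At⦄ ⦃ω : Ω⦄, ω ∈ F.S Φ →
    La ω ⊆ F.S Φ ∧ ∀ ⦃Ψ : Set At⦄, Ψ ⊆ Φ → F.r Φ Ψ '' La ω = La (F.r Φ Ψ ω)
  explicitMeas : ∀ ⦃ω ω' : Ω⦄, ω' ∈ La ω → Pi ω' = Pi ω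
  implicitMeas : ∀ ⦃Φ Ψ : Set At⦄ ⦃ω ω' : Ω⦄, ω ∈ F.S Φ → Pi ω ⊆ F.S Ψ →
    ω' ∈ Pi ω → La ω' = F.r Φ Ψ '' La ω

/-- Properties of the primitive implicit possibility correspondence `La` of an
implicit knowledge-based HMS model: nonemptiness, Reflexivity, Stationarity, and
Projections Preserve Implicit Knowledge. -/
structure IsImplicitStar (F : HMSFrame At Ω) (La : Ω → Set Ω) : Prop where
  nonempty : ∀ ω : Ω, (La ω).Nonempty
  refl : ∀ ω : Ω, ω ∈ La ω
  stationarity : ∀ ⦃ω ω' : Ω⦄, ω' ∈ La ω → La ω' = La ω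
  projImplicit : ∀ ⦃Φ : Set At⦄ ⦃ω : Ω⦄, ω ∈ F.S Φ →
    La ω ⊆ F.S Φ ∧ ∀ ⦃Ψ : Set At⦄, Ψ ⊆ Φ → F.r Φ Ψ '' La ω = La (F.r Φ Ψ ω)

/-- Property (O) (Lack of Conception): the awareness level at `ω ∈ S Φ` (encoded
by its index `al ω ⊆ At`, so that the awareness level is the space `S (al ω)`)
is weakly less expressive than `S Φ`. -/
def PropO (F : HMSFrame At Ω) (al : Ω → Set At) : Prop :=
  ∀ ⦃Φ : Set At⦄ ⦃ω : Ω⦄, ω ∈ F.S Φ → al ω ⊆ Φ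

/-- Property (I) (Awareness Measurability). -/
def PropI (F : HMSFrame At Ω) (La : Ω → Set Ω) (al : Ω → Set At) : Prop :=
  ∀ ⦃ω ω' : Ω⦄, ω' ∈ La ω → al ω' = al ω

/-- Property (II): if `ω ∈ S Φ` and `S Ψ ⪯ α(ω)` then `α(ω_Ψ) = S Ψ`. -/
def PropII (F : HMSFrame At Ω) (al : Ω → Set At) : Prop :=
  ∀ ⦃Φ Ψ : Set At⦄ ⦃ω : Ω⦄, ω ∈ F.S Φ → Ψ ⊆ al ω → Ψ ⊆ Φ → al (F.r Φ Ψ ω) = Ψ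

/-- Property (III): if `ω ∈ S Φ` and `α(ω) ⪯ S Ψ ⪯ S Φ` then `α(ω_Ψ) = α(ω)`. -/
def PropIII (F : HMSFrame At Ω) (al : Ω → Set At) : Prop :=
  ∀ ⦃Φ Ψ : Set At⦄ ⦃ω : Ω⦄, ω ∈ F.S Φ → al ω ⊆ Ψ → Ψ ⊆ Φ → al (F.r Φ Ψ ω) = al ω

/-- Property (IV): if `ω ∈ S Φ` and `Ψ ⊆ Φ` then `α(ω) ⪰ α(ω_Ψ)`. -/
def PropIV (F : HMSFrame At Ω) (al : Ω → Set At) : Prop :=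
  ∀ ⦃Φ Ψ : Set At⦄ ⦃ω : Ω⦄, ω ∈ F.S Φ → Ψ ⊆ Φ → al (F.r Φ Ψ ω) ⊆ al ω

/-- `PiS` is the explicit possibility correspondence derived from the implicit
possibility correspondence `La` and the awareness function `al`:
`Π*(ω_Ψ) := (Λ*(ω))_{α(ω_Ψ)}` for all `ω ∈ S Φ` and `Ψ ⊆ Φ`. -/
def DerivedPi (F : HMSFrame At Ω) (La : Ω → Set Ω) (al : Ω → Set At)
    (PiS : Ω → Set Ω) : Prop :=
  ∀ ⦃Φ Ψ : Set At⦄ ⦃ω : Ω⦄, ω ∈ F.S Φ → Ψ ⊆ Φ →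
    PiS (F.r Φ Ψ ω) = F.r Φ (al (F.r Φ Ψ ω)) '' La ω

/-- The (explicit) knowledge operator `K(E) := {ω : Π(ω) ⊆ E}` (as a set this
agrees with the definition with default value `∅^{S(E)}` on the vacuous case). -/
def Kop (F : HMSFrame At Ω) (Pi : Ω → Set Ω) (E : Set Ω) : Set Ω :=
  {ω : Ω | Pi ω ⊆ E}

/-- The implicit knowledge operator `L(E) := {ω : Λ(ω) ⊆ E}`. -/
def Lop (F : HMSFrame At Ω) (La : Ω → Set Ω) (E : Set Ω) : Set Ω :=
  {ω : Ω | La ω ⊆ E}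

/-- The awareness operator `A(E) := {ω : S_{Π(ω)} ⪰ S(E)}`, applied to an event
with base-space `S Φ`. -/
def Aop (F : HMSFrame At Ω) (Pi : Ω → Set Ω) (Φ : Set At) : Set Ω :=
  {ω : Ω | ∃ Ψ : Set At, Φ ⊆ Ψ ∧ Pi ω ⊆ F.S Ψ}

/-- The unawareness operator `U(E) := ¬A(E)`, applied to an event with
base-space `S Φ` (recall `A(E)` is an `S(E)`-based event). -/
def Uop (F : HMSFrame At Ω) (Pi : Ω → Set Ω) (Φ : Set At) : Set Ω :=
  F.neg Φ (Aop F Pi Φ)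

/-- The awareness operator `A*(E) := {ω : α(ω) ⪰ S(E)}` defined from the
awareness function, applied to an event with base-space `S Φ`. -/
def AopStar (al : Ω → Set At) (Φ : Set At) : Set Ω :=
  {ω : Ω | Φ ⊆ al ω}

/-- An HMS model: the frame together with a possibility correspondence for each
individual and a valuation mapping each atomic formula to an event. -/
structure HMSModel (At Ω I : Type*) extends HMSFrame At Ω where
  Pi : I → Ω → Set Ω
  Pi_poss : ∀ i : I, IsPossibility toHMSFrame (Pi i)
  val : At → Set Ω
  val_event : ∀ p : At, ∃ Φ : Set At, toHMSFrame.IsEvent Φ (val p)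

/-- A complemented HMS model: an HMS model together with an implicit possibility
correspondence for each individual. -/
structure CompHMSModel (At Ω I : Type*) extends HMSModel At Ω I where
  La : I → Ω → Set Ω
  La_impl : ∀ i : I, IsImplicit toHMSModel.toHMSFrame (Pi i) (La i)

/-- An implicit knowledge-based HMS model: the frame together with, for each
individual, a primitive implicit possibility correspondence and an awareness
function satisfying (O)-(IV), and a valuation mapping atoms to events. -/
structure ImpHMSModel (At Ω I : Type*) extends HMSFrame At Ω where
  LaS : I → Ω → Set Ω
  LaS_impl : ∀ i : I, IsImplicitStar toHMSFrame (LaS i)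
  al : I → Ω → Set At
  al_O : ∀ i : I, PropO toHMSFrame (al i)
  al_I : ∀ i : I, PropI toHMSFrame (LaS i) (al i)
  al_II : ∀ i : I, PropII toHMSFrame (al i)
  al_III : ∀ i : I, PropIII toHMSFrame (al i)
  al_IV : ∀ i : I, PropIV toHMSFrame (al i)
  val : At → Set Ω
  val_event : ∀ p : At, ∃ Φ : Set At, toHMSFrame.IsEvent Φ (val p)

namespace HMSFrame

variable {F : HMSFrame At Ω} {La : Ω → Set Ω} {Φ Ψ Θ : Set At} {D E : Set Ω} {ω : Ω}

theorem eq_of_mem_S (hΦ : ω ∈ F.S Φ) (hΨ : ω ∈ F.S Ψ) : Φ = Ψ :=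
  by_contra fun hne => Set.disjoint_left.1 (F.S_disjoint hne) hΦ hΨ

theorem mem_up_iff (hω : ω ∈ F.S Θ) : ω ∈ F.up Φ D ↔ Φ ⊆ Θ ∧ F.r Θ Φ ω ∈ D := by
  constructor
  · rintro ⟨Θ', hΦΘ', hω', hD⟩
    obtain rfl := eq_of_mem_S hω hω'
    exact ⟨hΦΘ', hD⟩
  · rintro ⟨hΦΘ, hD⟩
    exact ⟨Θ, hΦΘ, hω, hD⟩

theorem IsEvent.base_subset (hE : F.IsEvent Φ E) (hω : ω ∈ F.S Θ) (hωE : ω ∈ E) : Φ ⊆ Θ := by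
  obtain ⟨D, -, rfl⟩ := hE
  exact ((mem_up_iff hω).1 hωE).1

theorem IsEvent.proj_mem (hE : F.IsEvent Φ E) (hω : ω ∈ F.S Θ) (hωE : ω ∈ E) :
    F.r Θ Φ ω ∈ E := by
  obtain ⟨D, hD, rfl⟩ := hE
  have hproj : F.r Θ Φ ω ∈ D := ((mem_up_iff hω).1 hωE).2
  refine (mem_up_iff (hD hproj)).2 ⟨subset_rfl, ?_⟩
  rwa [F.r_id Φ _ (hD hproj)]

theorem IsEvent.base_subset_of_mem_Lop (hE : F.IsEvent Φ E) (hne : (La ω).Nonempty)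
    (hconf : La ω ⊆ F.S Θ) (hωL : ω ∈ Lop F La E) : Φ ⊆ Θ := by
  obtain ⟨ω', hω'⟩ := hne
  exact hE.base_subset (hconf hω') (hωL hω')

theorem IsEvent.proj_mem_Lop (hE : F.IsEvent Φ E) (hconf : La ω ⊆ F.S Θ)
    (hproj : La (F.r Θ Φ ω) ⊆ F.r Θ Φ '' La ω) (hωL : ω ∈ Lop F La E) :
    F.r Θ Φ ω ∈ Lop F La E :=
  hproj.trans (Set.image_subset_iff.2 fun _ hω' => hE.proj_mem (hconf hω') (hωL hω'))

theorem IsEvent.base_Lop_eq (hE : F.IsEvent Φ E) (hL : F.IsEvent Ψ (Lop F La E))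
    (hne : ∀ ω, (La ω).Nonempty) (hconf : ∀ ⦃Θ ω⦄, ω ∈ F.S Θ → La ω ⊆ F.S Θ)
    (hproj : ∀ ⦃Θ Υ ω⦄, ω ∈ F.S Θ → Υ ⊆ Θ → La (F.r Θ Υ ω) ⊆ F.r Θ Υ '' La ω)
    (hLne : (Lop F La E).Nonempty) : Ψ = Φ := by
  obtain ⟨ω, hωL⟩ := hLne
  obtain ⟨Θ, hω⟩ := F.S_cover ω
  have hΦΘ : Φ ⊆ Θ := hE.base_subset_of_mem_Lop (hne ω) (hconf hω) hωL
  have hΨΘ : Ψ ⊆ Θ := hL.base_subset hω hωL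
  have hωΦ : F.r Θ Φ ω ∈ Lop F La E := hE.proj_mem_Lop (hconf hω) (hproj hω hΦΘ) hωL
  have hωΨ : F.r Θ Ψ ω ∈ Lop F La E := hL.proj_mem hω hωL
  apply Set.Subset.antisymm
  · exact hL.base_subset (F.r_mem hΦΘ hω) hωΦ
  · exact hE.base_subset_of_mem_Lop (hne _) (hconf (F.r_mem hΨΘ hω)) hωΨ

end HMSFrame

theorem awareness_of_implicit_knowledge_general {F : HMSFrame At Ω} (Pi : Ω → Set Ω)
    {La : Ω → Set Ω} {Φ Ψ : Set At} {E : Set Ω} (hE : F.IsEvent Φ E)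
    (hL : F.IsEvent Ψ (Lop F La E)) (hbase : (Lop F La E).Nonempty ∨ Ψ = Φ)
    (hne : ∀ ω, (La ω).Nonempty) (hconf : ∀ ⦃Θ ω⦄, ω ∈ F.S Θ → La ω ⊆ F.S Θ)
    (hproj : ∀ ⦃Θ Υ ω⦄, ω ∈ F.S Θ → Υ ⊆ Θ → La (F.r Θ Υ ω) ⊆ F.r Θ Υ '' La ω) :
    Aop F Pi Ψ = Aop F Pi Φ :=
  congrArg (Aop F Pi) (hbase.elim (hE.base_Lop_eq hL hne hconf hproj) id)

/-- In any complemented HMS model, for every individual `i ∈ I` and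
every event `E`, awareness of implicit knowledge of an event equals awareness of
the event: `A_i(L_i(E)) = A_i(E)`. Here `Ψ` is the base-space of the event
`L_i(E)` (for nonempty `L_i(E)` it is its unique base-space; for the vacuous case
the definition of `L_i` gives the default base-space `S(E) = S_Φ`). -/
theorem awareness_of_implicit_knowledge
    {At Ω I : Type*} [Nonempty At] [Nonempty I]
    (M : CompHMSModel At Ω I) (i : I) (Φ Ψ : Set At) (E : Set Ω)
    (hE : M.toHMSFrame.IsEvent Φ E)
    (hL : M.toHMSFrame.IsEvent Ψ (Lop M.toHMSFrame (M.La i) E))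
    (hbase : (Lop M.toHMSFrame (M.La i) E).Nonempty ∨ Ψ = Φ) :
    Aop M.toHMSFrame (M.Pi i) Ψ = Aop M.toHMSFrame (M.Pi i) Φ :=
  awareness_of_implicit_knowledge_general (M.Pi i) hE hL hbase (fun ω => ⟨ω, (M.La_impl i).refl ω⟩)
    (fun _ _ hω => ((M.La_impl i).projImplicit hω).1)
    (fun _ _ _ hω hΥ => (((M.La_impl i).projImplicit hω).2 hΥ).superset)
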